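/- Let G and G' be achievement positional games on disjoint vertex sets. If o(G)=L and o(G')=R, then o(G∪G') ≠ D; that is, it is not the case that optimal play on G∪G' leads to a draw both when Left starts and when Right starts. -/

import Mathlib

namespace APG

/-- The two players: Left and Right. -/
inductive Player : Type
  | L : Player
  | R : Player
deriving DecidableEq, Repr

/-- The opponent of a player. -/
def Player.other : Player → Player
  | .L => .R
  | .R => .L

/-- An achievement positional game: a finite vertex set together with the set of
blue edges (Left's winning sets) and the set of red edges (Right's winning sets). -/
structure Game : Type where
  V : Finset ℕ
  EL : Finset (Finset ℕ)
  ER : Finset (Finset ℕ)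

/-- The edges are nonempty subsets of the vertex set. -/
def WellFormed (G : Game) : Prop :=
  (∀ e ∈ G.EL, e ⊆ G.V ∧ e.Nonempty) ∧ (∀ e ∈ G.ER, e ⊆ G.V ∧ e.Nonempty)

/-- The winning sets of a given player. -/
def Game.edges (G : Game) : Player → Finset (Finset ℕ)
  | .L => G.EL
  | .R => G.ER

/-- The player who makes the `i`-th move (0-indexed) when `s` moves first. -/
def mover (s : Player) (i : ℕ) : Player := if i % 2 = 0 then s else s.other

/-- The set of vertices picked by player `p` along the history `h`
(the chronological list of the moves played so far), when `s` moved first. -/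
def picked (s p : Player) (h : List ℕ) : Finset ℕ :=
  ((Finset.range h.length).filter fun i => mover s i = p).image fun i => h.getD i 0

/-- The set `S` of picked vertices fills some edge of `E`. -/
def fills (E : Finset (Finset ℕ)) (S : Finset ℕ) : Prop := ∃ e ∈ E, e ⊆ S

/-- The game is over: some player has picked all the vertices of one of their edges. -/
def ended (G : Game) (s : Player) (h : List ℕ) : Prop :=
  fills G.EL (picked s .L h) ∨ fills G.ER (picked s .R h)

/-- `h` is a legal history: no vertex is picked twice, every picked vertex belongs to
the board, and no move is made after the game has ended. -/
def ValidHist (G : Game) (s : Player) (h : List ℕ) : Prop :=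
  h.Nodup ∧ (∀ x ∈ h, x ∈ G.V) ∧ ∀ k, k < h.length → ¬ ended G s (h.take k)

/-- A strategy: a map assigning to each position (history) a vertex to pick. -/
abbrev Strategy := List ℕ → ℕ

/-- Along `h`, every move of player `p` agrees with the strategy `σ`. -/
def Follows (s p : Player) (σ : Strategy) (h : List ℕ) : Prop :=
  ∀ k, k < h.length → mover s k = p → h.getD k 0 = σ (h.take k)

/-- A finished play: either the game has ended or all vertices have been picked. -/
def Complete (G : Game) (s : Player) (h : List ℕ) : Prop :=
  ended G s h ∨ h.length = G.V.card

/-- The strategy `σ` of player `p` always suggests a legal move (an unpicked vertex)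
whenever the game is not over and it is `p`'s turn. -/
def Legal (G : Game) (s p : Player) (σ : Strategy) : Prop :=
  ∀ h, ValidHist G s h → Follows s p σ h → ¬ ended G s h → h.length < G.V.card →
    mover s h.length = p → σ h ∈ G.V ∧ σ h ∉ h

/-- Player `p` has a winning strategy on `G` when `s` moves first: following it,
every finished play ends with `p` having filled one of their edges (and, the game
having ended right there, the opponent has not filled an edge first). -/
def WinsAs (G : Game) (s p : Player) : Prop :=
  ∃ σ : Strategy, Legal G s p σ ∧
    ∀ h, ValidHist G s h → Follows s p σ h → Complete G s h →
      fills (G.edges p) (picked s p h)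

/-- Player `p` has a non-losing strategy on `G` when `s` moves first: following it,
the opponent never fills one of their edges. -/
def NonLosingAs (G : Game) (s p : Player) : Prop :=
  ∃ σ : Strategy, Legal G s p σ ∧
    ∀ h, ValidHist G s h → Follows s p σ h → Complete G s h →
      ¬ fills (G.edges p.other) (picked s p.other h)

/-- The possible results of the game, for a fixed starting player. -/
inductive Result : Type
  | Lwin : Result
  | draw : Result
  | Rwin : Result
deriving DecidableEq, Repr

/-- The result of `G` with optimal play, when `s` moves first, is `r`:
a win for a player means that player has a winning strategy, a draw means
both players have non-losing strategies. -/
def resultIs (G : Game) (s : Player) : Result → Prop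
  | .Lwin => WinsAs G s .L
  | .Rwin => WinsAs G s .R
  | .draw => NonLosingAs G s .L ∧ NonLosingAs G s .R

/-- An outcome: the pair of results with optimal play
(when Left starts, when Right starts). -/
abbrev Outcome := Result × Result

/-- `G` has outcome `o`. -/
def hasOutcome (G : Game) (o : Outcome) : Prop :=
  resultIs G .L o.1 ∧ resultIs G .R o.2

/-- Numerical value of a result, from Left's point of view:
Right wins < draw < Left wins. -/
def Result.val : Result → ℕ
  | .Rwin => 0
  | .draw => 1
  | .Lwin => 2

/-- The partial order `≤_L` on outcomes, comparing both components simultaneously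
from Left's point of view. -/
def outLE (o o' : Outcome) : Prop := o.1.val ≤ o'.1.val ∧ o.2.val ≤ o'.2.val

def oL : Outcome := (.Lwin, .Lwin)
def oLminus : Outcome := (.Lwin, .draw)
def oN : Outcome := (.Lwin, .Rwin)
def oD : Outcome := (.draw, .draw)
def oRminus : Outcome := (.draw, .Rwin)
def oR : Outcome := (.Rwin, .Rwin)

/-- The updated game `G_u` after Left has picked `u`. -/
def subL (G : Game) (u : ℕ) : Game where
  V := G.V.erase u
  EL := G.EL.image fun e => e.erase u
  ER := G.ER.filter fun e => u ∉ e

/-- The updated game `G^u` after Right has picked `u`. -/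
def subR (G : Game) (u : ℕ) : Game where
  V := G.V.erase u
  EL := G.EL.filter fun e => u ∉ e
  ER := G.ER.image fun e => e.erase u

/-- The updated game `G_u^v` after Left has picked `u` and Right has picked `v`. -/
def updLR (G : Game) (u v : ℕ) : Game where
  V := (G.V.erase u).erase v
  EL := (G.EL.filter fun e => v ∉ e).image fun e => e.erase u
  ER := (G.ER.filter fun e => u ∉ e).image fun e => e.erase v

/-- The disjoint union of two games. -/
def gunion (G G' : Game) : Game where
  V := G.V ∪ G'.V
  EL := G.EL ∪ G'.EL
  ER := G.ER ∪ G'.ER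

/-- An abstract two-player game in which extra moves never hurt: `le p q` says that `q` is at
least as good as `p` for Left. -/
structure Arena where
  Pos : Type
  moveL : Pos → Pos → Prop
  moveR : Pos → Pos → Prop
  wonL : Pos → Prop
  wonR : Pos → Prop
  size : Pos → ℕ
  le : Pos → Pos → Prop
  size_moveL : ∀ {p q}, moveL p q → size q < size p
  size_moveR : ∀ {p q}, moveR p q → size q < size p
  exists_move_iff : ∀ p, (∃ q, moveL p q) ↔ ∃ q, moveR p q
  le_refl : ∀ p, le p p
  le_moveL : ∀ {p q}, moveL p q → le p q
  le_moveR : ∀ {p q}, moveR p q → le q p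
  wonL_of_le : ∀ {p q}, le p q → wonL p → wonL q
  wonR_of_le : ∀ {p q}, le p q → wonR q → wonR p
  simL : ∀ {p p' q}, le p p' → moveL p q → le q p' ∨ ∃ q', moveL p' q' ∧ le q q'
  simR : ∀ {p p' q'}, le p p' → moveR p' q' → le p q' ∨ ∃ q, moveR p q ∧ le q q'

namespace Arena

/-- The same arena with the roles of the players exchanged. -/
def swap (X : Arena) : Arena where
  Pos := X.Pos
  moveL := X.moveR
  moveR := X.moveL
  wonL := X.wonR
  wonR := X.wonL
  size := X.size
  le p q := X.le q p
  le_refl := X.le_refl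
  size_moveL := X.size_moveR
  size_moveR := X.size_moveL
  exists_move_iff p := (X.exists_move_iff p).symm
  le_moveL := X.le_moveR
  le_moveR := X.le_moveL
  wonL_of_le := X.wonR_of_le
  wonR_of_le := X.wonL_of_le
  simL := X.simR
  simR := X.simL

/-- The disjoint sum of two arenas: a move is a move in one of the components. -/
def prod (X Y : Arena) : Arena where
  Pos := X.Pos × Y.Pos
  moveL p q := (X.moveL p.1 q.1 ∧ p.2 = q.2) ∨ (p.1 = q.1 ∧ Y.moveL p.2 q.2)
  moveR p q := (X.moveR p.1 q.1 ∧ p.2 = q.2) ∨ (p.1 = q.1 ∧ Y.moveR p.2 q.2)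
  wonL p := X.wonL p.1 ∨ Y.wonL p.2
  wonR p := X.wonR p.1 ∨ Y.wonR p.2
  size p := X.size p.1 + Y.size p.2
  le p q := X.le p.1 q.1 ∧ Y.le p.2 q.2
  le_refl p := ⟨X.le_refl p.1, Y.le_refl p.2⟩
  size_moveL := by
    rintro ⟨a, b⟩ ⟨c, d⟩ (⟨h, rfl⟩ | ⟨rfl, h⟩)
    · have := X.size_moveL h; simp only at this ⊢; omega
    · have := Y.size_moveL h; simp only at this ⊢; omega
  size_moveR := by
    rintro ⟨a, b⟩ ⟨c, d⟩ (⟨h, rfl⟩ | ⟨rfl, h⟩)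
    · have := X.size_moveR h; simp only at this ⊢; omega
    · have := Y.size_moveR h; simp only at this ⊢; omega
  exists_move_iff := by
    rintro ⟨a, b⟩
    constructor
    · rintro ⟨⟨c, d⟩, ⟨h, rfl⟩ | ⟨rfl, h⟩⟩
      · obtain ⟨c', h'⟩ := (X.exists_move_iff _).1 ⟨_, h⟩
        exact ⟨(c', b), Or.inl ⟨h', rfl⟩⟩
      · obtain ⟨d', h'⟩ := (Y.exists_move_iff _).1 ⟨_, h⟩
        exact ⟨(a, d'), Or.inr ⟨rfl, h'⟩⟩
    · rintro ⟨⟨c, d⟩, ⟨h, rfl⟩ | ⟨rfl, h⟩⟩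
      · obtain ⟨c', h'⟩ := (X.exists_move_iff _).2 ⟨_, h⟩
        exact ⟨(c', b), Or.inl ⟨h', rfl⟩⟩
      · obtain ⟨d', h'⟩ := (Y.exists_move_iff _).2 ⟨_, h⟩
        exact ⟨(a, d'), Or.inr ⟨rfl, h'⟩⟩
  le_moveL := by
    rintro ⟨a, b⟩ ⟨c, d⟩ (⟨h, rfl⟩ | ⟨rfl, h⟩)
    · exact ⟨X.le_moveL h, Y.le_refl b⟩
    · exact ⟨X.le_refl a, Y.le_moveL h⟩
  le_moveR := by
    rintro ⟨a, b⟩ ⟨c, d⟩ (⟨h, rfl⟩ | ⟨rfl, h⟩)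
    · exact ⟨X.le_moveR h, Y.le_refl b⟩
    · exact ⟨X.le_refl a, Y.le_moveR h⟩
  wonL_of_le h := Or.imp (X.wonL_of_le h.1) (Y.wonL_of_le h.2)
  wonR_of_le h := Or.imp (X.wonR_of_le h.1) (Y.wonR_of_le h.2)
  simL := by
    rintro ⟨a, b⟩ ⟨c, d⟩ ⟨e, f⟩ ⟨h1, h2⟩ (⟨h, rfl⟩ | ⟨rfl, h⟩)
    · rcases X.simL h1 h with h3 | ⟨q', h3, h4⟩
      · exact Or.inl ⟨h3, h2⟩
      · exact Or.inr ⟨(q', d), Or.inl ⟨h3, rfl⟩, h4, h2⟩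
    · rcases Y.simL h2 h with h3 | ⟨q', h3, h4⟩
      · exact Or.inl ⟨h1, h3⟩
      · exact Or.inr ⟨(c, q'), Or.inr ⟨rfl, h3⟩, h1, h4⟩
  simR := by
    rintro ⟨a, b⟩ ⟨c, d⟩ ⟨e, f⟩ ⟨h1, h2⟩ (⟨h, rfl⟩ | ⟨rfl, h⟩)
    · rcases X.simR h1 h with h3 | ⟨q', h3, h4⟩
      · exact Or.inl ⟨h3, h2⟩
      · exact Or.inr ⟨(q', b), Or.inl ⟨h3, rfl⟩, h4, h2⟩
    · rcases Y.simR h2 h with h3 | ⟨q', h3, h4⟩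
      · exact Or.inl ⟨h1, h3⟩
      · exact Or.inr ⟨(a, q'), Or.inr ⟨rfl, h3⟩, h1, h4⟩

mutual

/-- Left can avoid losing from the given position when Right is to move. -/
inductive SafeSecond (X : Arena) : X.Pos → Prop
  | won {p} : ¬ X.wonR p → X.wonL p → SafeSecond X p
  | step {p} : ¬ X.wonR p → (∀ q, X.moveR p q → SafeFirst X q) → SafeSecond X p

/-- Left can avoid losing from the given position when Left is to move. -/
inductive SafeFirst (X : Arena) : X.Pos → Prop
  | won {p} : ¬ X.wonR p → X.wonL p → SafeFirst X p
  | stuck {p} : ¬ X.wonR p → (∀ q, ¬ X.moveL p q) → SafeFirst X p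
  | move {p q} : ¬ X.wonR p → X.moveL p q → SafeSecond X q → SafeFirst X p

end

variable {X Y Z : Arena}

theorem SafeSecond.not_wonR {p : X.Pos} (h : X.SafeSecond p) : ¬ X.wonR p := by
  cases h <;> assumption

theorem SafeFirst.not_wonR {p : X.Pos} (h : X.SafeFirst p) : ¬ X.wonR p := by
  cases h <;> assumption

theorem SafeSecond.safeFirst_of_moveR {p q : X.Pos} (h : X.SafeSecond p) (hL : ¬ X.wonL p)
    (hq : X.moveR p q) : X.SafeFirst q := by
  cases h with
  | won _ h => exact absurd h hL
  | step _ h => exact h q hq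

theorem SafeFirst.exists_move {p : X.Pos} (h : X.SafeFirst p) (hL : ¬ X.wonL p) :
    (∀ q, ¬ X.moveL p q) ∨ ∃ q, X.moveL p q ∧ X.SafeSecond q := by
  cases h with
  | won _ h => exact absurd h hL
  | stuck _ h => exact Or.inl h
  | move _ h h' => exact Or.inr ⟨_, h, h'⟩

theorem not_moveR_of_stuck {p : X.Pos} (h : ∀ q, ¬ X.moveL p q) (q : X.Pos) :
    ¬ X.moveR p q := fun hq =>
  let ⟨q', hq'⟩ := (X.exists_move_iff p).2 ⟨q, hq⟩
  h q' hq'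

theorem safeSecond_of_stuck {p : X.Pos} (hR : ¬ X.wonR p) (h : ∀ q, ¬ X.moveL p q) :
    X.SafeSecond p :=
  .step hR fun q hq => absurd hq (not_moveR_of_stuck h q)

theorem safe_mono_aux (n : ℕ) : ∀ p' : X.Pos, X.size p' = n → ∀ m, ∀ p : X.Pos, X.size p = m →
    X.le p p' → (X.SafeSecond p → X.SafeSecond p') ∧ (X.SafeFirst p → X.SafeFirst p') := by
  induction n using Nat.strong_induction_on with
  | _ n ihn =>
  intro p' hp' m
  have tempo : ∀ q : X.Pos, X.size q ≤ n → X.SafeSecond q → X.SafeFirst q := by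
    intro q hq h
    by_cases hs : ∃ q', X.moveL q q'
    · obtain ⟨q', hm⟩ := hs
      have hlt := X.size_moveL hm
      exact .move h.not_wonR hm ((ihn _ (by omega) q' rfl _ q rfl (X.le_moveL hm)).1 h)
    · exact .stuck h.not_wonR (not_exists.1 hs)
  induction m using Nat.strong_induction_on with
  | _ m ihm =>
  intro p hp hle
  have second : X.SafeSecond p → X.SafeSecond p' := by
    intro h
    have hR : ¬ X.wonR p' := fun hw => h.not_wonR (X.wonR_of_le hle hw)
    by_cases hL : X.wonL p
    · exact .won hR (X.wonL_of_le hle hL)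
    · refine .step hR fun q' hq' => ?_
      have hlt := X.size_moveR hq'
      rcases X.simR hle hq' with h1 | ⟨q, hq, h1⟩
      · exact tempo q' (by omega) ((ihn _ (by omega) q' rfl _ p rfl h1).1 h)
      · exact (ihn _ (by omega) q' rfl _ q rfl h1).2 (h.safeFirst_of_moveR hL hq)
  refine ⟨second, fun h => ?_⟩
  have hR : ¬ X.wonR p' := fun hw => h.not_wonR (X.wonR_of_le hle hw)
  cases h with
  | won _ h => exact .won hR (X.wonL_of_le hle h)
  | stuck h1 h => exact tempo p' hp'.le (second (safeSecond_of_stuck h1 h))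
  | @move _ q h1 hq h =>
    have hlt := X.size_moveL hq
    rcases X.simL hle hq with h2 | ⟨q', hq', h2⟩
    · exact tempo p' hp'.le ((ihm _ (by omega) q rfl h2).1 h)
    · have hlt' := X.size_moveL hq'
      exact .move hR hq' ((ihn _ (by omega) q' rfl _ q rfl h2).1 h)

theorem SafeFirst.mono {p p' : X.Pos} (h : X.SafeFirst p) (hle : X.le p p') : X.SafeFirst p' :=
  (safe_mono_aux _ p' rfl _ p rfl hle).2 h

theorem SafeSecond.mono {p p' : X.Pos} (h : X.SafeSecond p) (hle : X.le p p') :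
    X.SafeSecond p' :=
  (safe_mono_aux _ p' rfl _ p rfl hle).1 h

theorem SafeSecond.safeFirst {p : X.Pos} (h : X.SafeSecond p) : X.SafeFirst p := by
  by_cases hs : ∃ q, X.moveL p q
  · obtain ⟨q, hm⟩ := hs
    exact .move h.not_wonR hm (h.mono (X.le_moveL hm))
  · exact .stuck h.not_wonR (not_exists.1 hs)

/-- A map between arenas that preserves and reflects moves and wins. -/
structure IsBisim (f : X.Pos → Y.Pos) : Prop where
  moveL_map : ∀ {p q}, X.moveL p q → Y.moveL (f p) (f q)
  moveL_lift : ∀ {p q'}, Y.moveL (f p) q' → ∃ q, X.moveL p q ∧ f q = q'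
  moveR_map : ∀ {p q}, X.moveR p q → Y.moveR (f p) (f q)
  moveR_lift : ∀ {p q'}, Y.moveR (f p) q' → ∃ q, X.moveR p q ∧ f q = q'
  wonL_iff : ∀ {p}, Y.wonL (f p) ↔ X.wonL p
  wonR_iff : ∀ {p}, Y.wonR (f p) ↔ X.wonR p

theorem IsBisim.swap {f : X.Pos → Y.Pos} (hf : IsBisim f) :
    IsBisim (X := X.swap) (Y := Y.swap) f where
  moveL_map := hf.moveR_map
  moveL_lift := hf.moveR_lift
  moveR_map := hf.moveL_map
  moveR_lift := hf.moveL_lift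
  wonL_iff := hf.wonR_iff
  wonR_iff := hf.wonL_iff

theorem IsBisim.map_safe {f : X.Pos → Y.Pos} (hf : IsBisim f) (n : ℕ) : ∀ p, X.size p = n →
    (X.SafeSecond p → Y.SafeSecond (f p)) ∧ (X.SafeFirst p → Y.SafeFirst (f p)) := by
  induction n using Nat.strong_induction_on with
  | _ n ih =>
  intro p hp
  constructor
  · intro h
    have hR : ¬ Y.wonR (f p) := fun hw => h.not_wonR (hf.wonR_iff.1 hw)
    cases h with
    | won _ h => exact .won hR (hf.wonL_iff.2 h)
    | step _ h =>
      refine .step hR fun q' hq' => ?_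
      obtain ⟨q, hq, rfl⟩ := hf.moveR_lift hq'
      exact (ih _ (hp ▸ X.size_moveR hq) q rfl).2 (h q hq)
  · intro h
    have hR : ¬ Y.wonR (f p) := fun hw => h.not_wonR (hf.wonR_iff.1 hw)
    cases h with
    | won _ h => exact .won hR (hf.wonL_iff.2 h)
    | stuck _ h =>
      refine .stuck hR fun q' hq' => ?_
      obtain ⟨q, hq, rfl⟩ := hf.moveL_lift hq'
      exact h q hq
    | @move _ q _ hq h =>
      exact .move hR (hf.moveL_map hq) ((ih _ (hp ▸ X.size_moveL hq) q rfl).1 h)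

theorem IsBisim.safeSecond {f : X.Pos → Y.Pos} (hf : IsBisim f) {p : X.Pos}
    (h : X.SafeSecond p) : Y.SafeSecond (f p) :=
  (hf.map_safe _ p rfl).1 h

theorem IsBisim.safeFirst {f : X.Pos → Y.Pos} (hf : IsBisim f) {p : X.Pos}
    (h : X.SafeFirst p) : Y.SafeFirst (f p) :=
  (hf.map_safe _ p rfl).2 h

theorem safeSecond_prod_comm {x : X.Pos} {y : Y.Pos} (h : (X.prod Y).SafeSecond (x, y)) :
    (Y.prod X).SafeSecond (y, x) := by
  have hf : IsBisim (X := X.prod Y) (Y := Y.prod X) Prod.swap :=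
    { moveL_map := fun h => (Or.symm h).imp And.symm And.symm
      moveL_lift := fun {_ q'} h => ⟨(q'.2, q'.1), (Or.symm h).imp And.symm And.symm, rfl⟩
      moveR_map := fun h => (Or.symm h).imp And.symm And.symm
      moveR_lift := fun {_ q'} h => ⟨(q'.2, q'.1), (Or.symm h).imp And.symm And.symm, rfl⟩
      wonL_iff := or_comm
      wonR_iff := or_comm }
  exact hf.safeSecond h

theorem safeSecond_prod_exchange {x x' : X.Pos} {y y' : Y.Pos}
    (h : ((X.prod Y).prod (X.prod Y)).SafeSecond ((x, y), (x', y'))) :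
    ((X.prod Y).prod (X.prod Y)).SafeSecond ((x', y), (x, y')) := by
  let f : ((X.prod Y).prod (X.prod Y)).Pos → ((X.prod Y).prod (X.prod Y)).Pos :=
    fun p => ((p.2.1, p.1.2), (p.1.1, p.2.2))
  have hf : IsBisim f := by
    constructor
    · rintro ⟨⟨a, b⟩, ⟨c, d⟩⟩ ⟨⟨a', b'⟩, ⟨c', d'⟩⟩ h
      simp only [f, prod, Prod.mk.injEq] at h ⊢
      tauto
    · rintro ⟨⟨a, b⟩, ⟨c, d⟩⟩ ⟨⟨a', b'⟩, ⟨c', d'⟩⟩ h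
      refine ⟨((c', b'), (a', d')), ?_, rfl⟩
      simp only [f, prod, Prod.mk.injEq] at h ⊢
      tauto
    · rintro ⟨⟨a, b⟩, ⟨c, d⟩⟩ ⟨⟨a', b'⟩, ⟨c', d'⟩⟩ h
      simp only [f, prod, Prod.mk.injEq] at h ⊢
      tauto
    · rintro ⟨⟨a, b⟩, ⟨c, d⟩⟩ ⟨⟨a', b'⟩, ⟨c', d'⟩⟩ h
      refine ⟨((c', b'), (a', d')), ?_, rfl⟩
      simp only [f, prod, Prod.mk.injEq] at h ⊢
      tauto
    · rintro ⟨⟨a, b⟩, ⟨c, d⟩⟩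
      simp only [f, prod]
      tauto
    · rintro ⟨⟨a, b⟩, ⟨c, d⟩⟩
      simp only [f, prod]
      tauto
  exact hf.safeSecond h

theorem safe_prod_aux (n : ℕ) : ∀ (x : X.Pos) (y : Y.Pos), X.size x + Y.size y = n →
    (X.SafeSecond x → Y.SafeSecond y → (X.prod Y).SafeSecond (x, y)) ∧
    (X.SafeFirst x → Y.SafeSecond y → (X.prod Y).SafeFirst (x, y)) ∧
    (X.SafeSecond x → Y.SafeFirst y → (X.prod Y).SafeFirst (x, y)) := by
  induction n using Nat.strong_induction_on with
  | _ n ih =>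
  intro x y hn
  have second : X.SafeSecond x → Y.SafeSecond y → (X.prod Y).SafeSecond (x, y) := by
    intro hx hy
    have hR : ¬ (X.prod Y).wonR (x, y) := not_or.2 ⟨hx.not_wonR, hy.not_wonR⟩
    by_cases hL : (X.prod Y).wonL (x, y)
    · exact .won hR hL
    obtain ⟨hLx, hLy⟩ := not_or.1 hL
    refine .step hR ?_
    rintro ⟨x', y'⟩ (⟨h, h'⟩ | ⟨h', h⟩)
    · obtain rfl : y = y' := h'
      have := X.size_moveR h
      exact (ih _ (by simp only at this; omega) x' y rfl).2.1 (hx.safeFirst_of_moveR hLx h) hy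
    · obtain rfl : x = x' := h'
      have := Y.size_moveR h
      exact (ih _ (by simp only at this; omega) x y' rfl).2.2 hx (hy.safeFirst_of_moveR hLy h)
  refine ⟨second, fun hx hy => ?_, fun hx hy => ?_⟩
  · have hR : ¬ (X.prod Y).wonR (x, y) := not_or.2 ⟨hx.not_wonR, hy.not_wonR⟩
    cases hx with
    | won _ h => exact .won hR (Or.inl h)
    | stuck h' h => exact (second (safeSecond_of_stuck h' h) hy).safeFirst
    | @move _ x' _ hm h =>
      have := X.size_moveL hm
      exact .move (q := (x', y)) hR (Or.inl ⟨hm, rfl⟩) ((ih _ (by omega) x' y rfl).1 h hy)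
  · have hR : ¬ (X.prod Y).wonR (x, y) := not_or.2 ⟨hx.not_wonR, hy.not_wonR⟩
    cases hy with
    | won _ h => exact .won hR (Or.inr h)
    | stuck h' h => exact (second hx (safeSecond_of_stuck h' h)).safeFirst
    | @move _ y' _ hm h =>
      have := Y.size_moveL hm
      exact .move (q := (x, y')) hR (Or.inr ⟨rfl, hm⟩) ((ih _ (by omega) x y' rfl).1 hx h)

theorem SafeSecond.prod {x : X.Pos} {y : Y.Pos} (hx : X.SafeSecond x) (hy : Y.SafeSecond y) :
    (X.prod Y).SafeSecond (x, y) :=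
  (safe_prod_aux _ x y rfl).1 hx hy

theorem safe_cancel_aux (n : ℕ) : ∀ (x : X.Pos) (y : Y.Pos), X.size x + Y.size y = n →
    Y.swap.SafeSecond y →
    ((X.prod Y).SafeSecond (x, y) → X.SafeSecond x) ∧
    ((X.prod Y).SafeFirst (x, y) → X.SafeFirst x) := by
  induction n using Nat.strong_induction_on with
  | _ n ih =>
  intro x y hn hy
  constructor
  · intro h
    obtain ⟨hRx, hRy⟩ := not_or.1 h.not_wonR
    by_cases hL : X.wonL x
    · exact .won hRx hL
    refine .step hRx fun x' hx' => ?_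
    have := X.size_moveR hx'
    exact (ih _ (by omega) x' y rfl hy).2 (h.safeFirst_of_moveR (q := (x', y))
      (not_or.2 ⟨hL, hy.not_wonR⟩) (Or.inl ⟨hx', rfl⟩))
  · intro h
    obtain ⟨hRx, hRy⟩ := not_or.1 h.not_wonR
    by_cases hL : X.wonL x
    · exact .won hRx hL
    rcases h.exists_move (not_or.2 ⟨hL, hy.not_wonR⟩) with hs | ⟨⟨x', y'⟩, hm, h'⟩
    · exact .stuck hRx fun x' hx' => hs (x', y) (Or.inl ⟨hx', rfl⟩)
    rcases hm with ⟨hm, e⟩ | ⟨e, hm⟩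
    · obtain rfl : y = y' := e
      have := X.size_moveL hm
      exact .move hRx hm ((ih _ (by simp only at this; omega) x' y rfl hy).1 h')
    · obtain rfl : x = x' := e
      have hlt : Y.size y' < Y.size y := Y.size_moveL hm
      obtain ⟨-, hRy'⟩ := not_or.1 h'.not_wonR
      have hF : Y.swap.SafeFirst y' := hy.safeFirst_of_moveR hRy hm
      rcases hF.exists_move hRy' with hs | ⟨y'', hm', h''⟩
      · exact ((ih _ (by omega) x y' rfl (safeSecond_of_stuck hF.not_wonR hs)).1 h').safeFirst
      · have hm' : Y.moveR y' y'' := hm'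
        have hlt' := Y.size_moveR hm'
        exact (ih _ (by omega) x y'' rfl h'').2 (h'.safeFirst_of_moveR (q := (x, y''))
          (not_or.2 ⟨hL, hF.not_wonR⟩) (Or.inr ⟨rfl, hm'⟩))

/-- If Left is safe on a sum as second player and Right is safe on one component as second
player, then Left is safe on the other component as second player. -/
theorem SafeSecond.cancel {x : X.Pos} {y : Y.Pos} (h : (X.prod Y).SafeSecond (x, y))
    (hy : Y.swap.SafeSecond y) : X.SafeSecond x :=
  (safe_cancel_aux _ x y rfl hy).1 h

/-- If Left is safe on a sum as second player and Right is safe on one component as first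
player, then Left is safe on the other component as first player. -/
theorem SafeSecond.cancel_first {x : X.Pos} {y : Y.Pos} (h : (X.prod Y).SafeSecond (x, y))
    (hy : Y.swap.SafeFirst y) : X.SafeFirst x := by
  obtain ⟨hRx, hRy⟩ := not_or.1 h.not_wonR
  by_cases hL : X.wonL x
  · exact .won hRx hL
  rcases hy.exists_move hRy with hs | ⟨y', hm, h'⟩
  · exact (h.cancel (safeSecond_of_stuck hy.not_wonR hs)).safeFirst
  · have hm : Y.moveR y y' := hm
    exact (safe_cancel_aux (Y := Y) _ x y' rfl h').2 (h.safeFirst_of_moveR (q := (x, y'))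
      (not_or.2 ⟨hL, hy.not_wonR⟩) (Or.inr ⟨rfl, hm⟩))

theorem SafeSecond.trans {x x' : X.Pos} {y y' : Y.Pos} (h : (X.prod Y).SafeSecond (x, y))
    (h1 : (X.prod Y).swap.SafeSecond (x, y')) (h2 : (X.prod Y).SafeSecond (x', y')) :
    (X.prod Y).SafeSecond (x', y) :=
  (safeSecond_prod_exchange (h.prod h2)).cancel h1

theorem not_safeFirst_of_safeSecond_swap {x : X.Pos} {y : Y.Pos} (hx : ¬ X.swap.SafeFirst x)
    (h : (X.prod Y).swap.SafeSecond (x, y)) : ¬ Y.SafeFirst y := fun hy =>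
  have h' : (X.swap.prod Y.swap).SafeSecond (x, y) := h
  hx (h'.cancel_first (Y := Y.swap) hy)

theorem not_safeFirst_swap_of_safeSecond {x : X.Pos} {y : Y.Pos} (hy : ¬ Y.SafeFirst y)
    (h : (X.prod Y).SafeSecond (x, y)) : ¬ X.swap.SafeFirst x := fun hx =>
  hy ((safeSecond_prod_comm h).cancel_first hx)

/-- A chain of positions `(u k, v k)` in which Right is safe as second player, except at the
single index `j` where he is only known to be safe as first player, while Left is safe as
second player in `(u (k + 1), v k)` and wins `u 0` as second player. -/
structure Chain (X Y : Arena) (m n j : ℕ) (u : ℕ → X.Pos) (v : ℕ → Y.Pos) : Prop where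
  link : ∀ k, (X.prod Y).SafeSecond (u (k + 1), v k)
  head : ¬ X.swap.SafeFirst (u 0)
  rung : ∀ k, k ≠ j → (X.prod Y).swap.SafeSecond (u k, v k)
  gap : (X.prod Y).swap.SafeFirst (u j, v j)
  size_lt : ∀ k ≤ j, X.size (u k) < m
  size_le_left : ∀ k, X.size (u k) ≤ m
  size_le_right : ∀ k, Y.size (v k) ≤ n

section

variable {m n j : ℕ} {u : ℕ → X.Pos} {v : ℕ → Y.Pos}

theorem Chain.not_safeFirst_swap (h : Chain X Y m n j u v) :
    ∀ k ≤ j, ¬ X.swap.SafeFirst (u k) := by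
  intro k
  induction k with
  | zero => exact fun _ => h.head
  | succ k ih =>
    intro hk
    exact not_safeFirst_swap_of_safeSecond
      (not_safeFirst_of_safeSecond_swap (ih (by omega)) (h.rung k (by omega))) (h.link k)

theorem Chain.not_safeFirst (h : Chain X Y m n j u v) {k : ℕ} (hk : k < j) :
    ¬ Y.SafeFirst (v k) :=
  not_safeFirst_of_safeSecond_swap (h.not_safeFirst_swap k hk.le) (h.rung k hk.ne)

theorem Chain.update_left (h : Chain X Y m n j u v) {x : X.Pos}
    (hsize : X.size x < X.size (u j)) (hhead : j = 0 → ¬ X.swap.SafeFirst x)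
    (hlink : ∀ i, j = i + 1 → (X.prod Y).SafeSecond (x, v i))
    (hgap : (X.prod Y).swap.SafeFirst (x, v j)) :
    Chain X Y m n j (Function.update u j x) v where
  link k := by have := h.link k; grind
  head := by have := h.head; grind
  rung k hk := by have := h.rung k hk; grind
  gap := by simpa using hgap
  size_lt k hk := by have := h.size_lt k hk; grind
  size_le_left k := by have := h.size_le_left k; grind
  size_le_right := h.size_le_right

theorem Chain.update_right (h : Chain X Y m n j u v) {y : Y.Pos}
    (hsize : Y.size y < Y.size (v j))
    (hlink : (X.prod Y).SafeSecond (u (j + 1), y))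
    (hgap : (X.prod Y).swap.SafeFirst (u j, y)) :
    Chain X Y m n j u (Function.update v j y) where
  link k := by have := h.link k; grind
  head := h.head
  rung k hk := by have := h.rung k hk; grind
  gap := by simpa using hgap
  size_lt := h.size_lt
  size_le_left := h.size_le_left
  size_le_right k := by have := h.size_le_right k; grind

theorem Chain.pred {i : ℕ} (h : Chain X Y m n (i + 1) u v) {x : X.Pos} {y : Y.Pos}
    (hx : X.size x < X.size (u (i + 1))) (hy : Y.size y < Y.size (v i))
    (hlink : (X.prod Y).SafeSecond (x, y))
    (hrung : (X.prod Y).swap.SafeSecond (x, v (i + 1)))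
    (hgap : (X.prod Y).swap.SafeFirst (u i, y)) :
    Chain X Y m n i (Function.update u (i + 1) x) (Function.update v i y) where
  link k := by have := h.link k; grind
  head := by have := h.head; grind
  rung k hk := by have := h.rung k; grind
  gap := by simpa using hgap
  size_lt k hk := by have := h.size_lt k (by omega); grind
  size_le_left k := by have := h.size_le_left k; grind
  size_le_right k := by have := h.size_le_right k; grind

theorem Chain.succ (h : Chain X Y m n j u v) {x : X.Pos} {y : Y.Pos}
    (hx : X.size x < X.size (u (j + 1))) (hy : Y.size y < Y.size (v j))
    (hlink : (X.prod Y).SafeSecond (x, y))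
    (hrung : (X.prod Y).swap.SafeSecond (u j, y))
    (hgap : (X.prod Y).swap.SafeFirst (x, v (j + 1))) :
    Chain X Y m n (j + 1) (Function.update u (j + 1) x) (Function.update v j y) where
  link k := by have := h.link k; grind
  head := by have := h.head; grind
  rung k hk := by have := h.rung k; grind
  gap := by simpa using hgap
  size_lt k hk := by
    have := h.size_lt k
    have := h.size_le_left (j + 1)
    grind
  size_le_left k := by have := h.size_le_left k; grind
  size_le_right k := by have := h.size_le_right k; grind

theorem Chain.step (h : Chain X Y m n j u v) : ∃ j' ≤ j + 1, ∃ u' v', Chain X Y m n j' u' v' ∧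
    (∀ k, X.size (u' k) + Y.size (v' k) ≤ X.size (u k) + Y.size (v k)) ∧
    X.size (u' j) + Y.size (v' j) < X.size (u j) + Y.size (v j) := by
  have hu := h.not_safeFirst_swap j le_rfl
  obtain ⟨hLu, hLv⟩ : ¬ X.wonL (u j) ∧ ¬ Y.wonL (v j) := not_or.1 h.gap.not_wonR
  have hRu : ¬ X.wonR (u j) := fun hw => hu (.won hLu hw)
  have hRv : ¬ Y.wonR (v j) := (not_or.1 (h.link j).not_wonR).2
  rcases h.gap.exists_move (not_or.2 ⟨hRu, hRv⟩) with hs | ⟨⟨x, w⟩, hm, hS⟩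
  · exact absurd (.stuck hLu fun q hq => hs (q, v j) (Or.inl ⟨hq, rfl⟩)) hu
  rcases hm with ⟨hm, e⟩ | ⟨e, hm⟩
  · obtain rfl : v j = w := e
    have hm : X.moveR (u j) x := hm
    have hxs := X.size_moveR hm
    have hx : ¬ X.swap.SafeSecond x := fun hx => hu (.move hLu hm hx)
    have hLx : ¬ X.wonL x := (not_or.1 hS.not_wonR).1
    cases j with
    | zero =>
      obtain ⟨q, hq, hqF⟩ : ∃ q, X.moveL x q ∧ ¬ X.swap.SafeFirst q := by
        by_contra! hc
        exact hx (.step hLx hc)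
      have hRx : ¬ X.wonR x := fun hw => hx (.won hLx hw)
      have hqs := X.size_moveL hq
      refine ⟨0, by omega, _, _, h.update_left (x := q) (by omega) (fun _ => hqF) (by simp)
        (hS.safeFirst_of_moveR (not_or.2 ⟨hRx, hRv⟩) (Or.inl ⟨hq, rfl⟩)), ?_, ?_⟩
      · grind
      · grind
    | succ i =>
      have hvi := h.not_safeFirst i.lt_succ_self
      have hrung := h.rung i (by omega)
      obtain ⟨hLui, hLvi⟩ : ¬ X.wonL (u i) ∧ ¬ Y.wonL (v i) := not_or.1 hrung.not_wonR
      have hRui : ¬ X.wonR (u i) := fun hw =>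
        h.not_safeFirst_swap i (by omega) (.won hLui hw)
      have hF : (X.prod Y).SafeFirst (x, v i) := (h.link i).safeFirst_of_moveR (q := (x, v i))
        (not_or.2 ⟨hLu, hLvi⟩) (Or.inl ⟨hm, rfl⟩)
      have hRvi : ¬ Y.wonR (v i) := (not_or.1 hF.not_wonR).2
      rcases hF.exists_move (not_or.2 ⟨hLx, hLvi⟩) with hs | ⟨⟨y, z⟩, hm', hS'⟩
      · exact absurd (.stuck hRvi fun q hq => hs (x, q) (Or.inr ⟨rfl, hq⟩)) hvi
      rcases hm' with ⟨hm', e⟩ | ⟨e, hm'⟩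
      · obtain rfl : v i = z := e
        have hm' : X.moveL x y := hm'
        have hys := X.size_moveL hm'
        have hRx : ¬ X.wonR x := (not_or.1 hF.not_wonR).1
        refine ⟨i + 1, by omega, _, _, h.update_left (x := y) (by omega) (by simp) ?_
          (hS.safeFirst_of_moveR (not_or.2 ⟨hRx, hRv⟩) (Or.inl ⟨hm', rfl⟩)), ?_, ?_⟩
        · rintro _ ⟨rfl⟩
          exact hS'
        · grind
        · grind
      · obtain rfl : x = y := e
        have hm' : Y.moveL (v i) z := hm'
        have hzs := Y.size_moveL hm'
        refine ⟨i, by omega, _, _, h.pred hxs hzs hS' hS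
          (hrung.safeFirst_of_moveR (not_or.2 ⟨hRui, hRvi⟩) (Or.inr ⟨rfl, hm'⟩)), ?_, ?_⟩
        · grind
        · grind
  · obtain rfl : u j = x := e
    have hm : Y.moveR (v j) w := hm
    have hws := Y.size_moveR hm
    have hrung := h.rung (j + 1) (by omega)
    obtain ⟨hLu', hLv'⟩ : ¬ X.wonL (u (j + 1)) ∧ ¬ Y.wonL (v (j + 1)) :=
      not_or.1 hrung.not_wonR
    have hF : (X.prod Y).SafeFirst (u (j + 1), w) :=
      (h.link j).safeFirst_of_moveR (q := (u (j + 1), w)) (not_or.2 ⟨hLu', hLv⟩)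
        (Or.inr ⟨rfl, hm⟩)
    obtain ⟨hRu', hRw⟩ : ¬ X.wonR (u (j + 1)) ∧ ¬ Y.wonR w := not_or.1 hF.not_wonR
    have hRv' : ¬ Y.wonR (v (j + 1)) := (not_or.1 (h.link (j + 1)).not_wonR).2
    have hLw : ¬ Y.wonL w := (not_or.1 hS.not_wonR).2
    rcases hF.exists_move (not_or.2 ⟨hLu', hLw⟩) with hs | ⟨⟨y, z⟩, hm', hS'⟩
    · exact absurd (.stuck hRw fun q hq => hs (u (j + 1), q) (Or.inr ⟨rfl, hq⟩))
        (not_safeFirst_of_safeSecond_swap hu hS)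
    rcases hm' with ⟨hm', e⟩ | ⟨e, hm'⟩
    · obtain rfl : w = z := e
      have hm' : X.moveL (u (j + 1)) y := hm'
      have hys := X.size_moveL hm'
      refine ⟨j + 1, le_rfl, _, _, h.succ hys hws hS' hS
        (hrung.safeFirst_of_moveR (not_or.2 ⟨hRu', hRv'⟩) (Or.inl ⟨hm', rfl⟩)), ?_, ?_⟩
      · grind
      · grind
    · obtain rfl : u (j + 1) = y := e
      have hm' : Y.moveL w z := hm'
      have hzs := Y.size_moveL hm'
      refine ⟨j, by omega, _, _, h.update_right (y := z) (by omega) hS'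
        (hS.safeFirst_of_moveR (not_or.2 ⟨hRu, hRw⟩) (Or.inr ⟨rfl, hm'⟩)), ?_, ?_⟩
      · grind
      · grind

theorem Chain.extend (N s : ℕ) : ∀ j ≤ N, ∀ (u : ℕ → X.Pos) (v : ℕ → Y.Pos),
    Chain X Y m n j u v → ∑ k ∈ Finset.range (N + 1), (X.size (u k) + Y.size (v k)) = s →
    ∃ u' v', Chain X Y m n N u' v' := by
  induction s using Nat.strong_induction_on with
  | _ s ih =>
  intro j hj u v h hs
  rcases hj.eq_or_lt with rfl | hj
  · exact ⟨u, v, h⟩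
  obtain ⟨j', hj', u', v', h', hle, hlt⟩ := h.step
  refine ih _ ?_ j' (by omega) u' v' h' rfl
  rw [← hs]
  exact Finset.sum_lt_sum (fun k _ => hle k) ⟨j, by simp; omega, hlt⟩

end

theorem Chain.safeSecond {m n j : ℕ} {u : ℕ → X.Pos} {v : ℕ → Y.Pos}
    (h : Chain X Y m n j u v) (i d : ℕ) (hd : i + d < j) :
    (X.prod Y).SafeSecond (u (i + d + 1), v i) := by
  induction d with
  | zero => exact h.link i
  | succ d ih =>
    exact (ih (by omega)).trans (h.rung (i + d + 1) (by omega)) (h.link (i + d + 1))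

theorem not_safeSecond_prod_of_not_safeFirst [Finite X.Pos] (s : ℕ) :
    ∀ (a : X.Pos) (b : Y.Pos), X.size a + Y.size b = s →
    ¬ X.swap.SafeFirst a → ¬ Y.SafeFirst b →
    (X.prod Y).SafeSecond (a, b) → (X.prod Y).swap.SafeSecond (a, b) → False := by
  induction s using Nat.strong_induction_on with
  | _ s ih =>
  intro a b hs ha hb h1 h2
  obtain ⟨hRa, hRb⟩ : ¬ X.wonR a ∧ ¬ Y.wonR b := not_or.1 h1.not_wonR
  have hLa : ¬ X.wonL a := (not_or.1 h2.not_wonR).1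
  obtain ⟨c, hc⟩ : ∃ c, X.moveL a c := by
    by_contra! hc
    exact ha (.stuck hLa (not_moveR_of_stuck hc))
  have hcs := X.size_moveL hc
  have hchain : Chain X Y (X.size a) (Y.size b) 0 (Function.update (fun _ => a) 0 c)
      (fun _ => b) := by
    refine ⟨?_, ?_, ?_, ?_, ?_, ?_, ?_⟩
    · simpa using h1
    · simpa using fun h : X.swap.SafeFirst c => ha (h.mono (X.le_moveL hc))
    · intro k hk
      simpa [hk] using h2
    · simpa using h2.safeFirst_of_moveR (q := (c, b)) (not_or.2 ⟨hRa, hRb⟩)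
        (Or.inl ⟨hc, rfl⟩)
    · simpa using hcs
    · grind
    · simp
  obtain ⟨u, v, h⟩ := Chain.extend (Nat.card X.Pos) _ 0 (Nat.zero_le _) _ _ hchain rfl
  have : Fintype X.Pos := Fintype.ofFinite _
  obtain ⟨i, k, hik, huik⟩ := Fintype.exists_ne_map_eq_of_card_lt
    (fun k : Fin (Nat.card X.Pos + 1) => u k) (by simp [Nat.card_eq_fintype_card])
  wlog hlt : i < k generalizing i k
  · exact this k i hik.symm huik.symm (lt_of_le_of_ne (not_lt.1 hlt) hik.symm)
  have hlt' : (i : ℕ) < k := hlt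
  have hkN : (k : ℕ) ≤ Nat.card X.Pos := Nat.lt_succ_iff.1 k.2
  have hS := h.safeSecond i (k - i - 1) (by omega)
  rw [show (i : ℕ) + (k - i - 1) + 1 = k by omega, ← huik] at hS
  have hsi := h.size_lt i (by omega)
  have hsi' := h.size_le_right i
  exact ih _ (by omega) (u i) (v i) rfl (h.not_safeFirst_swap i (by omega))
    (h.not_safeFirst (by omega)) hS (h.rung i (by omega))

end Arena

/-- The arena of the game with vertex set `V` in which a position records the vertices picked so
far by each player, the winning sets of the first (resp. second) one being `E` (resp. `E'`). -/
def setArena (V : Finset ℕ) (E E' : Finset (Finset ℕ)) : Arena where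
  Pos := ↥(V.powerset ×ˢ V.powerset)
  moveL p q := ∃ y ∈ V, y ∉ p.1.1 ∧ y ∉ p.1.2 ∧ q.1 = (insert y p.1.1, p.1.2)
  moveR p q := ∃ y ∈ V, y ∉ p.1.1 ∧ y ∉ p.1.2 ∧ q.1 = (p.1.1, insert y p.1.2)
  wonL p := fills E p.1.1
  wonR p := fills E' p.1.2
  size p := (V \ (p.1.1 ∪ p.1.2)).card
  le p q := p.1.1 ⊆ q.1.1 ∧ q.1.2 ⊆ p.1.2
  size_moveL := by
    rintro p q ⟨y, hy, h1, h2, h⟩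
    refine Finset.card_lt_card (Finset.ssubset_iff_of_subset ?_ |>.2 ⟨y, ?_, ?_⟩) <;>
      grind
  size_moveR := by
    rintro p q ⟨y, hy, h1, h2, h⟩
    refine Finset.card_lt_card (Finset.ssubset_iff_of_subset ?_ |>.2 ⟨y, ?_, ?_⟩) <;>
      grind
  exists_move_iff := by
    rintro ⟨⟨l, r⟩, hp⟩
    rw [Finset.mem_product, Finset.mem_powerset, Finset.mem_powerset] at hp
    constructor
    · rintro ⟨-, y, hy, h1, h2, -⟩
      refine ⟨⟨(l, insert y r), ?_⟩, y, hy, h1, h2, rfl⟩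
      simp [Finset.insert_subset_iff, hy, hp.1, hp.2]
    · rintro ⟨-, y, hy, h1, h2, -⟩
      refine ⟨⟨(insert y l, r), ?_⟩, y, hy, h1, h2, rfl⟩
      simp [Finset.insert_subset_iff, hy, hp.1, hp.2]
  le_refl p := ⟨subset_rfl, subset_rfl⟩
  le_moveL := by
    rintro p q ⟨y, hy, h1, h2, h⟩
    rw [h]
    exact ⟨Finset.subset_insert _ _, subset_rfl⟩
  le_moveR := by
    rintro p q ⟨y, hy, h1, h2, h⟩
    rw [h]
    exact ⟨subset_rfl, Finset.subset_insert _ _⟩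
  wonL_of_le := fun h ⟨e, he, hs⟩ => ⟨e, he, hs.trans h.1⟩
  wonR_of_le := fun h ⟨e, he, hs⟩ => ⟨e, he, hs.trans h.2⟩
  simL := by
    rintro p ⟨⟨l, r⟩, hp⟩ q ⟨h1, h2⟩ ⟨y, hy, h3, h4, h⟩
    rw [Finset.mem_product, Finset.mem_powerset, Finset.mem_powerset] at hp
    rw [h]
    by_cases hyl : y ∈ l
    · exact Or.inl ⟨Finset.insert_subset hyl h1, h2⟩
    · refine Or.inr ⟨⟨(insert y l, r), ?_⟩, ⟨y, hy, hyl, fun hr => h4 (h2 hr), rfl⟩,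
        Finset.insert_subset_insert y h1, h2⟩
      simp [Finset.insert_subset_iff, hy, hp.1, hp.2]
  simR := by
    rintro ⟨⟨l, r⟩, hp⟩ p' q ⟨h1, h2⟩ ⟨y, hy, h3, h4, h⟩
    rw [Finset.mem_product, Finset.mem_powerset, Finset.mem_powerset] at hp
    rw [h]
    by_cases hyr : y ∈ r
    · exact Or.inl ⟨h1, Finset.insert_subset hyr h2⟩
    · refine Or.inr ⟨⟨(l, insert y r), ?_⟩, ⟨y, hy, fun hl => h3 (h1 hl), hyr, rfl⟩,
        h1, Finset.insert_subset_insert y h2⟩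
      simp [Finset.insert_subset_iff, hy, hp.1, hp.2]

instance (V : Finset ℕ) (E E' : Finset (Finset ℕ)) : Finite (setArena V E E').Pos :=
  inferInstanceAs (Finite ↥(V.powerset ×ˢ V.powerset))

/-- The initial position of `setArena`. -/
def setArena.start (V : Finset ℕ) (E E' : Finset (Finset ℕ)) : (setArena V E E').Pos :=
  ⟨(∅, ∅), by simp⟩

theorem mem_setArena {V l r : Finset ℕ} (hl : l ⊆ V) (hr : r ⊆ V) :
    (l, r) ∈ V.powerset ×ˢ V.powerset := by
  simp [hl, hr]

theorem isBisim_setArena_swap (V : Finset ℕ) (E E' : Finset (Finset ℕ)) :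
    Arena.IsBisim (X := setArena V E E') (Y := (setArena V E' E).swap)
      (fun p => ⟨p.1.swap, by have := p.2; simp at this ⊢; tauto⟩) where
  moveL_map := fun ⟨y, hy, h1, h2, h⟩ => ⟨y, hy, h2, h1, congrArg Prod.swap h⟩
  moveL_lift := by
    rintro p ⟨q, hq⟩ ⟨y, hy, h1, h2, h⟩
    have hq' := Finset.mem_product.1 hq
    refine ⟨⟨q.swap, Finset.mem_product.2 ⟨hq'.2, hq'.1⟩⟩, ⟨y, hy, h2, h1, congrArg Prod.swap h⟩,
      rfl⟩
  moveR_map := fun ⟨y, hy, h1, h2, h⟩ => ⟨y, hy, h2, h1, congrArg Prod.swap h⟩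
  moveR_lift := by
    rintro p ⟨q, hq⟩ ⟨y, hy, h1, h2, h⟩
    have hq' := Finset.mem_product.1 hq
    refine ⟨⟨q.swap, Finset.mem_product.2 ⟨hq'.2, hq'.1⟩⟩, ⟨y, hy, h2, h1, congrArg Prod.swap h⟩,
      rfl⟩
  wonL_iff := Iff.rfl
  wonR_iff := Iff.rfl

theorem fills_union_iff {V V' : Finset ℕ} {E E' : Finset (Finset ℕ)} (hE : ∀ e ∈ E, e ⊆ V)
    (hE' : ∀ e ∈ E', e ⊆ V') (S : Finset ℕ) :
    (fills E (S ∩ V) ∨ fills E' (S ∩ V')) ↔ fills (E ∪ E') S := by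
  constructor
  · rintro (⟨e, he, hs⟩ | ⟨e, he, hs⟩)
    · exact ⟨e, Finset.mem_union_left _ he, hs.trans Finset.inter_subset_left⟩
    · exact ⟨e, Finset.mem_union_right _ he, hs.trans Finset.inter_subset_left⟩
  · rintro ⟨e, he, hs⟩
    rcases Finset.mem_union.1 he with he | he
    · exact Or.inl ⟨e, he, Finset.subset_inter hs (hE e he)⟩
    · exact Or.inr ⟨e, he, Finset.subset_inter hs (hE' e he)⟩

theorem isBisim_setArena_union {V V' : Finset ℕ} {E F E' F' : Finset (Finset ℕ)}
    (hE : ∀ e ∈ E, e ⊆ V) (hF : ∀ e ∈ F, e ⊆ V) (hE' : ∀ e ∈ E', e ⊆ V')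
    (hF' : ∀ e ∈ F', e ⊆ V') (hV : Disjoint V V') :
    Arena.IsBisim (X := setArena (V ∪ V') (E ∪ E') (F ∪ F'))
      (Y := (setArena V E F).prod (setArena V' E' F'))
      (fun p => (⟨(p.1.1 ∩ V, p.1.2 ∩ V),
          mem_setArena Finset.inter_subset_right Finset.inter_subset_right⟩,
        ⟨(p.1.1 ∩ V', p.1.2 ∩ V'),
          mem_setArena Finset.inter_subset_right Finset.inter_subset_right⟩)) where
  moveL_map := by
    rintro ⟨⟨l, r⟩, hp⟩ ⟨⟨l', r'⟩, hq⟩ ⟨y, hy, h1, h2, h⟩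
    obtain ⟨rfl, rfl⟩ := Prod.mk.inj h
    dsimp only at h1 h2
    rcases Finset.mem_union.1 hy with hy | hy
    · have hy' := Finset.disjoint_left.1 hV hy
      refine Or.inl ⟨⟨y, hy, by simp [h1], by simp [h2], ?_⟩, ?_⟩
      · simp [Finset.insert_inter_of_mem hy]
      · simp [Finset.insert_inter_of_notMem hy']
        rfl
    · have hy' := Finset.disjoint_right.1 hV hy
      refine Or.inr ⟨?_, y, hy, by simp [h1], by simp [h2], ?_⟩
      · simp [Finset.insert_inter_of_notMem hy']
        rfl
      · simp [Finset.insert_inter_of_mem hy]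
  moveR_map := by
    rintro ⟨⟨l, r⟩, hp⟩ ⟨⟨l', r'⟩, hq⟩ ⟨y, hy, h1, h2, h⟩
    obtain ⟨rfl, rfl⟩ := Prod.mk.inj h
    dsimp only at h1 h2
    rcases Finset.mem_union.1 hy with hy | hy
    · have hy' := Finset.disjoint_left.1 hV hy
      refine Or.inl ⟨⟨y, hy, by simp [h1], by simp [h2], ?_⟩, ?_⟩
      · simp [Finset.insert_inter_of_mem hy]
      · simp [Finset.insert_inter_of_notMem hy']
        rfl
    · have hy' := Finset.disjoint_right.1 hV hy
      refine Or.inr ⟨?_, y, hy, by simp [h1], by simp [h2], ?_⟩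
      · simp [Finset.insert_inter_of_notMem hy']
        rfl
      · simp [Finset.insert_inter_of_mem hy]
  moveL_lift := by
    rintro ⟨⟨l, r⟩, hp⟩ ⟨⟨a, ha⟩, ⟨b, hb⟩⟩ (⟨⟨y, hy, h1, h2, h⟩, h'⟩ | ⟨h', y, hy, h1, h2, h⟩)
    all_goals
      obtain ⟨hl, hr⟩ := Finset.mem_product.1 hp
      rw [Finset.mem_powerset] at hl hr
      dsimp only at h h' hl hr
      subst h
      obtain rfl := congrArg Subtype.val h'
    · have hy' := Finset.disjoint_left.1 hV hy
      refine ⟨⟨(insert y l, r), mem_setArena (Finset.insert_subset (by simp [hy]) hl) hr⟩,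
        ⟨y, by simp [hy], by simpa [hy] using h1, by simpa [hy] using h2, rfl⟩, ?_⟩
      simp [Finset.insert_inter_of_mem hy, Finset.insert_inter_of_notMem hy']
      rfl
    · have hy' := Finset.disjoint_right.1 hV hy
      refine ⟨⟨(insert y l, r), mem_setArena (Finset.insert_subset (by simp [hy]) hl) hr⟩,
        ⟨y, by simp [hy], by simpa [hy] using h1, by simpa [hy] using h2, rfl⟩, ?_⟩
      simp [Finset.insert_inter_of_mem hy, Finset.insert_inter_of_notMem hy']
      rfl
  moveR_lift := by
    rintro ⟨⟨l, r⟩, hp⟩ ⟨⟨a, ha⟩, ⟨b, hb⟩⟩ (⟨⟨y, hy, h1, h2, h⟩, h'⟩ | ⟨h', y, hy, h1, h2, h⟩)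
    all_goals
      obtain ⟨hl, hr⟩ := Finset.mem_product.1 hp
      rw [Finset.mem_powerset] at hl hr
      dsimp only at h h' hl hr
      subst h
      obtain rfl := congrArg Subtype.val h'
    · have hy' := Finset.disjoint_left.1 hV hy
      refine ⟨⟨(l, insert y r), mem_setArena hl (Finset.insert_subset (by simp [hy]) hr)⟩,
        ⟨y, by simp [hy], by simpa [hy] using h1, by simpa [hy] using h2, rfl⟩, ?_⟩
      simp [Finset.insert_inter_of_mem hy, Finset.insert_inter_of_notMem hy']
      rfl
    · have hy' := Finset.disjoint_right.1 hV hy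
      refine ⟨⟨(l, insert y r), mem_setArena hl (Finset.insert_subset (by simp [hy]) hr)⟩,
        ⟨y, by simp [hy], by simpa [hy] using h1, by simpa [hy] using h2, rfl⟩, ?_⟩
      simp [Finset.insert_inter_of_mem hy, Finset.insert_inter_of_notMem hy']
      rfl
  wonL_iff := fills_union_iff hE hE' _
  wonR_iff := fills_union_iff hF hF' _

theorem Player.other_ne (p : Player) : p.other ≠ p := by cases p <;> decide

theorem Player.eq_or_eq_other (p q : Player) : q = p ∨ q = p.other := by
  cases p <;> cases q <;> decide

theorem mover_succ (s : Player) (i : ℕ) : mover s (i + 1) = (mover s i).other := by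
  unfold mover
  rcases Nat.mod_two_eq_zero_or_one i with h | h
  · rw [if_neg (by omega), if_pos h]
  · rw [if_pos (by omega), if_neg (by omega)]
    cases s <;> rfl

theorem mem_picked {s p : Player} {h : List ℕ} {x : ℕ} :
    x ∈ picked s p h ↔ ∃ i, ∃ hi : i < h.length, mover s i = p ∧ h[i] = x := by
  simp only [picked, Finset.mem_image, Finset.mem_filter, Finset.mem_range]
  constructor
  · rintro ⟨i, ⟨hi, hm⟩, rfl⟩
    exact ⟨i, hi, hm, by simp [hi]⟩
  · rintro ⟨i, hi, hm, rfl⟩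
    exact ⟨i, ⟨hi, hm⟩, by simp [hi]⟩

theorem picked_append (s p : Player) (h : List ℕ) (x : ℕ) :
    picked s p (h ++ [x]) =
      if mover s h.length = p then insert x (picked s p h) else picked s p h := by
  ext y
  split_ifs with hp
  · rw [Finset.mem_insert, mem_picked, mem_picked]
    constructor
    · rintro ⟨i, hi, hm, rfl⟩
      by_cases hl : i < h.length
      · exact Or.inr ⟨i, hl, hm, by simp [hl]⟩
      · obtain rfl : i = h.length := by simp at hi; omega
        simp
    · rintro (rfl | ⟨i, hi, hm, rfl⟩)
      · exact ⟨h.length, by simp, hp, by simp⟩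
      · exact ⟨i, by simp; omega, hm, by simp [hi]⟩
  · rw [mem_picked, mem_picked]
    constructor
    · rintro ⟨i, hi, hm, rfl⟩
      by_cases hl : i < h.length
      · exact ⟨i, hl, hm, by simp [hl]⟩
      · obtain rfl : i = h.length := by simp at hi; omega
        exact absurd hm hp
    · rintro ⟨i, hi, hm, rfl⟩
      exact ⟨i, by simp; omega, hm, by simp [hi]⟩

theorem mem_picked_or (s p : Player) {h : List ℕ} {x : ℕ} :
    x ∈ picked s p h ∨ x ∈ picked s p.other h ↔ x ∈ h := by
  rw [mem_picked, mem_picked]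
  constructor
  · rintro (⟨i, hi, -, rfl⟩ | ⟨i, hi, -, rfl⟩) <;> exact List.getElem_mem hi
  · intro hx
    obtain ⟨i, hi, rfl⟩ := List.getElem_of_mem hx
    rcases p.eq_or_eq_other (mover s i) with hm | hm
    · exact Or.inl ⟨i, hi, hm, rfl⟩
    · exact Or.inr ⟨i, hi, hm, rfl⟩

theorem ended_iff (G : Game) (s p : Player) (h : List ℕ) :
    ended G s h ↔
      fills (G.edges p) (picked s p h) ∨ fills (G.edges p.other) (picked s p.other h) := by
  cases p
  · exact Iff.rfl
  · exact or_comm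

theorem ValidHist.append {G : Game} {s : Player} {h : List ℕ} (hv : ValidHist G s h)
    (hend : ¬ ended G s h) {x : ℕ} (hx : x ∈ G.V) (hxh : x ∉ h) :
    ValidHist G s (h ++ [x]) := by
  obtain ⟨h1, h2, h3⟩ := hv
  refine ⟨?_, ?_, ?_⟩
  · rw [List.nodup_append]
    grind
  · grind
  · intro k hk
    rw [List.length_append, List.length_singleton] at hk
    rw [List.take_append_of_le_length (by omega)]
    rcases Nat.lt_or_ge k h.length with hk' | hk'
    · exact h3 k hk'
    · rwa [List.take_of_length_le hk']

theorem ValidHist.length_le {G : Game} {s : Player} {h : List ℕ} (hv : ValidHist G s h) :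
    h.length ≤ G.V.card := by
  rw [← List.toFinset_card_of_nodup hv.1]
  exact Finset.card_le_card fun x hx => hv.2.1 x (List.mem_toFinset.1 hx)

theorem ValidHist.mem_of_card_le_length {G : Game} {s : Player} {h : List ℕ}
    (hv : ValidHist G s h) (hl : G.V.card ≤ h.length) {x : ℕ} (hx : x ∈ G.V) : x ∈ h := by
  rw [← List.toFinset_card_of_nodup hv.1] at hl
  rw [← List.mem_toFinset, Finset.eq_of_subset_of_card_le
    (fun x hx => hv.2.1 x (List.mem_toFinset.1 hx)) hl]
  exact hx

theorem Game.exists_notMem_of_length_lt {G : Game} {h : List ℕ}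
    (hl : h.length < G.V.card) : ∃ x ∈ G.V, x ∉ h := by
  by_contra! hc
  have : G.V.card ≤ h.toFinset.card :=
    Finset.card_le_card fun x hx => List.mem_toFinset.2 (hc x hx)
  have := h.toFinset_card_le
  omega

theorem Follows.append {s p : Player} {σ : Strategy} {h : List ℕ} (hf : Follows s p σ h)
    {x : ℕ} (hx : mover s h.length = p → x = σ h) : Follows s p σ (h ++ [x]) := by
  intro k hk hm
  rw [List.length_append, List.length_singleton] at hk
  rw [List.take_append_of_le_length (by omega)]
  rcases Nat.lt_or_ge k h.length with hk' | hk'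
  · rw [← hf k hk' hm]
    simp [hk', List.getElem?_append_left]
  · obtain rfl : k = h.length := by omega
    simp [hx hm]

/-- The arena of `G` from the point of view of player `p`. -/
abbrev Game.arena (G : Game) (p : Player) : Arena :=
  setArena G.V (G.edges p) (G.edges p.other)

theorem ValidHist.exists_pos {G : Game} {s : Player} {h : List ℕ} (hv : ValidHist G s h)
    (p : Player) : ∃ q : (G.arena p).Pos, q.1 = (picked s p h, picked s p.other h) :=
  ⟨⟨_, mem_setArena (fun x hx => hv.2.1 x ((mem_picked_or s p).1 (Or.inl hx)))
    (fun x hx => hv.2.1 x ((mem_picked_or s p).1 (Or.inr hx)))⟩, rfl⟩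

theorem moveL_of_append {G : Game} {s p : Player} {h : List ℕ} {x : ℕ} (hx : x ∈ G.V)
    (hxh : x ∉ h) (hm : mover s h.length = p) {q q' : (G.arena p).Pos}
    (hq : q.1 = (picked s p h, picked s p.other h))
    (hq' : q'.1 = (picked s p (h ++ [x]), picked s p.other (h ++ [x]))) :
    (G.arena p).moveL q q' := by
  obtain ⟨h1, h2⟩ := not_or.1 (mt (mem_picked_or s p).1 hxh)
  refine ⟨x, hx, by rwa [hq], by rwa [hq], ?_⟩
  rw [hq', hq, picked_append, picked_append, if_pos hm, if_neg (hm ▸ p.other_ne.symm)]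

theorem moveR_of_append {G : Game} {s p : Player} {h : List ℕ} {x : ℕ} (hx : x ∈ G.V)
    (hxh : x ∉ h) (hm : mover s h.length = p.other) {q q' : (G.arena p).Pos}
    (hq : q.1 = (picked s p h, picked s p.other h))
    (hq' : q'.1 = (picked s p (h ++ [x]), picked s p.other (h ++ [x]))) :
    (G.arena p).moveR q q' := by
  obtain ⟨h1, h2⟩ := not_or.1 (mt (mem_picked_or s p).1 hxh)
  refine ⟨x, hx, by rwa [hq], by rwa [hq], ?_⟩
  rw [hq', hq, picked_append, picked_append, if_pos hm, if_neg (hm ▸ p.other_ne)]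

theorem exists_append_of_moveL {G : Game} {s p : Player} {h : List ℕ}
    (hm : mover s h.length = p) {q q' : (G.arena p).Pos}
    (hq : q.1 = (picked s p h, picked s p.other h)) (hqq' : (G.arena p).moveL q q') :
    ∃ x ∈ G.V, x ∉ h ∧ q'.1 = (picked s p (h ++ [x]), picked s p.other (h ++ [x])) := by
  obtain ⟨x, hx, h1, h2, he⟩ := hqq'
  rw [hq] at h1 h2 he
  refine ⟨x, hx, mt (mem_picked_or s p).2 (not_or.2 ⟨h1, h2⟩), ?_⟩
  rw [he, picked_append, picked_append, if_pos hm, if_neg (hm ▸ p.other_ne.symm)]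

theorem exists_append_of_moveR {G : Game} {s p : Player} {h : List ℕ}
    (hm : mover s h.length = p.other) {q q' : (G.arena p).Pos}
    (hq : q.1 = (picked s p h, picked s p.other h)) (hqq' : (G.arena p).moveR q q') :
    ∃ x ∈ G.V, x ∉ h ∧ q'.1 = (picked s p (h ++ [x]), picked s p.other (h ++ [x])) := by
  obtain ⟨x, hx, h1, h2, he⟩ := hqq'
  rw [hq] at h1 h2 he
  refine ⟨x, hx, mt (mem_picked_or s p).2 (not_or.2 ⟨h1, h2⟩), ?_⟩
  rw [he, picked_append, picked_append, if_pos hm, if_neg (hm ▸ p.other_ne)]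

theorem safe_of_nonLosing {G : Game} {s p : Player} {σ : Strategy} (hσ : Legal G s p σ)
    (hnl : ∀ h, ValidHist G s h → Follows s p σ h → Complete G s h →
      ¬ fills (G.edges p.other) (picked s p.other h)) (n : ℕ) :
    ∀ h, G.V.card - h.length = n → ValidHist G s h → Follows s p σ h → ∀ q : (G.arena p).Pos,
      q.1 = (picked s p h, picked s p.other h) →
      (mover s h.length = p → (G.arena p).SafeFirst q) ∧
      (mover s h.length = p.other → (G.arena p).SafeSecond q) := by
  induction n using Nat.strong_induction_on with
  | _ n ih =>
  intro h hn hv hf q hq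
  have hR : ¬ (G.arena p).wonR q := by
    intro hw
    have hw : fills (G.edges p.other) q.1.2 := hw
    rw [hq] at hw
    exact hnl h hv hf (Or.inl ((ended_iff G s p h).2 (Or.inr hw))) hw
  by_cases hL : (G.arena p).wonL q
  · exact ⟨fun _ => .won hR hL, fun _ => .won hR hL⟩
  have hend : ¬ ended G s h := by
    rw [ended_iff G s p h, not_or]
    constructor
    · have hL : ¬ fills (G.edges p) q.1.1 := hL
      rwa [hq] at hL
    · have hR : ¬ fills (G.edges p.other) q.1.2 := hR
      rwa [hq] at hR
  refine ⟨fun hm => ?_, fun hm => .step hR fun q' hqq' => ?_⟩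
  · by_cases hl : h.length < G.V.card
    · obtain ⟨hx, hxh⟩ := hσ h hv hf hend hl hm
      have hv' := hv.append hend hx hxh
      obtain ⟨q', hq'⟩ := hv'.exists_pos p
      exact .move hR (moveL_of_append hx hxh hm hq hq')
        ((ih _ (by simp; omega) _ rfl hv' (hf.append fun _ => rfl) q' hq').2
          (by simp [mover_succ, hm]))
    · refine .stuck hR fun q' hqq' => ?_
      obtain ⟨x, hx, hxh, -⟩ := exists_append_of_moveL hm hq hqq'
      exact hxh (hv.mem_of_card_le_length (by omega) hx)
  · obtain ⟨x, hx, hxh, hq'⟩ := exists_append_of_moveR hm hq hqq'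
    have hv' := hv.append hend hx hxh
    have := hv'.length_le
    rw [List.length_append, List.length_singleton] at this
    refine (ih _ (by simp; omega) _ rfl hv' (hf.append fun hm' => ?_) q' hq').1 ?_
    · exact absurd (hm.symm.trans hm') p.other_ne
    · simp only [List.length_append, List.length_singleton, mover_succ, hm]
      cases p <;> rfl

theorem not_safe_of_winning {G : Game} {s p : Player} {σ : Strategy} (hσ : Legal G s p.other σ)
    (hw : ∀ h, ValidHist G s h → Follows s p.other σ h → Complete G s h →
      fills (G.edges p.other) (picked s p.other h)) (n : ℕ) :
    ∀ h, G.V.card - h.length = n → ValidHist G s h → Follows s p.other σ h →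
      ∀ q : (G.arena p).Pos, q.1 = (picked s p h, picked s p.other h) →
      (mover s h.length = p → ¬ (G.arena p).SafeFirst q) ∧
      (mover s h.length = p.other → ¬ (G.arena p).SafeSecond q) := by
  induction n using Nat.strong_induction_on with
  | _ n ih =>
  intro h hn hv hf q hq
  by_cases hR : (G.arena p).wonR q
  · exact ⟨fun _ hs => hs.not_wonR hR, fun _ hs => hs.not_wonR hR⟩
  have hR' : ¬ fills (G.edges p.other) (picked s p.other h) := by
    have hR : ¬ fills (G.edges p.other) q.1.2 := hR
    rwa [hq] at hR
  have hcomp : ¬ Complete G s h := fun hc => hR' (hw h hv hf hc)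
  obtain ⟨hend, hl⟩ := not_or.1 hcomp
  have hl : h.length < G.V.card := lt_of_le_of_ne hv.length_le hl
  have hL : ¬ (G.arena p).wonL q := by
    intro hL
    have hL : fills (G.edges p) q.1.1 := hL
    rw [hq] at hL
    exact hend ((ended_iff G s p h).2 (Or.inl hL))
  refine ⟨fun hm hs => ?_, fun hm hs => ?_⟩
  · rcases hs.exists_move hL with hs | ⟨q', hqq', hs⟩
    · obtain ⟨x, hx, hxh⟩ := Game.exists_notMem_of_length_lt hl
      obtain ⟨q', hq'⟩ := (hv.append hend hx hxh).exists_pos p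
      exact hs q' (moveL_of_append hx hxh hm hq hq')
    · obtain ⟨x, hx, hxh, hq'⟩ := exists_append_of_moveL hm hq hqq'
      refine (ih _ (by simp; omega) _ rfl (hv.append hend hx hxh)
        (hf.append fun hm' => ?_) q' hq').2 (by simp [mover_succ, hm]) hs
      exact absurd (hm'.symm.trans hm) p.other_ne
  · obtain ⟨hx, hxh⟩ := hσ h hv hf hend hl hm
    have hv' := hv.append hend hx hxh
    obtain ⟨q', hq'⟩ := hv'.exists_pos p
    refine (ih _ (by simp; omega) _ rfl hv' (hf.append fun _ => rfl) q' hq').1 ?_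
      (hs.safeFirst_of_moveR hL (moveR_of_append hx hxh hm hq hq'))
    simp only [List.length_append, List.length_singleton, mover_succ, hm]
    cases p <;> rfl

theorem validHist_nil (G : Game) (s : Player) : ValidHist G s [] := by
  simp [ValidHist]

theorem follows_nil (s p : Player) (σ : Strategy) : Follows s p σ [] := by
  simp [Follows]

theorem NonLosingAs.safeSecond {G : Game} {p : Player} (h : NonLosingAs G p.other p) :
    (G.arena p).SafeSecond (setArena.start _ _ _) := by
  obtain ⟨σ, hσ, hnl⟩ := h
  exact (safe_of_nonLosing hσ hnl _ [] rfl (validHist_nil _ _) (follows_nil _ _ _) _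
    (by simp [setArena.start, picked])).2 (by simp [mover])

theorem WinsAs.not_safeFirst {G : Game} {p : Player} (h : WinsAs G p p.other) :
    ¬ (G.arena p).SafeFirst (setArena.start _ _ _) := by
  obtain ⟨σ, hσ, hw⟩ := h
  exact (not_safe_of_winning hσ hw _ [] rfl (validHist_nil _ _) (follows_nil _ _ _) _
    (by simp [setArena.start, picked])).1 (by simp [mover])

/-- If `o(G) = L` and `o(G') = R`, then `o(G ∪ G') ≠ D`. -/
theorem union_L_R_not_draw (G G' : Game) (hG : WellFormed G) (hG' : WellFormed G')
    (hdisj : Disjoint G.V G'.V)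
    (hGo : hasOutcome G oL) (hG'o : hasOutcome G' oR) :
    ¬ hasOutcome (gunion G G') oD := by
  rintro ⟨⟨-, hR⟩, ⟨hL, -⟩⟩
  have ha : ¬ (G.arena .R).SafeFirst _ := WinsAs.not_safeFirst (p := .R) hGo.2
  have hb : ¬ (G'.arena .L).SafeFirst _ := WinsAs.not_safeFirst (p := .L) hG'o.1
  have hL : ((gunion G G').arena .L).SafeSecond _ := NonLosingAs.safeSecond (p := .L) hL
  have hR : ((gunion G G').arena .R).SafeSecond _ := NonLosingAs.safeSecond (p := .R) hR
  have hf := isBisim_setArena_union (fun e he => (hG.1 e he).1) (fun e he => (hG.2 e he).1)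
    (fun e he => (hG'.1 e he).1) (fun e he => (hG'.2 e he).1) hdisj
  have hswap := isBisim_setArena_swap (gunion G G').V (gunion G G').ER (gunion G G').EL
  have h1 := hf.safeSecond hL
  have h2 := hf.swap.safeSecond (hswap.safeSecond hR)
  refine Arena.not_safeSecond_prod_of_not_safeFirst (X := G.arena .L) (Y := G'.arena .L) _
    (setArena.start _ _ _) (setArena.start _ _ _) rfl (fun h => ha ?_) hb ?_ ?_
  · exact (isBisim_setArena_swap G.V G.EL G.ER).swap.safeFirst h
  · exact h1
  · exact h2

end APG
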